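/- For every integer k ≥ 1, set N = {1,…,2k−1}. There exist a real symmetric (2k−1)×(2k−1) matrix G with zero diagonal and a vector c ∈ ℝ^{2k−1} such that: (i) for every J ⊆ N with |J| = k, the k×k matrix obtained by adjoining the column c_J to the k×(k−1) submatrix G_{J,N∖J} is invertible; and (ii) for every J' ⊆ N with |J'| = k−1, the rows of the (k−1)×k submatrix G_{J',N∖J'} are linearly independent. -/

import Mathlib

open Matrix Finset

/-- The `k × k` matrix `[G_{J,N∖J} ∣ c_J]` obtained by adjoining the column `c_J` to the
submatrix `G_{J,N∖J}`. -/
noncomputable def adjMat (k : ℕ) (G : Matrix (Fin (2 * k - 1)) (Fin (2 * k - 1)) ℝ)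
    (c : Fin (2 * k - 1) → ℝ) (J : Finset (Fin (2 * k - 1))) :
    Matrix {x // x ∈ J} ({x // x ∈ Jᶜ} ⊕ Unit) ℝ :=
  Matrix.of fun j col =>
    match col with
    | Sum.inl i => G j.1 i.1
    | Sum.inr _ => c j.1

/-
Take for `G` the complete graph with edge weights `1 / (x i + x j)` and for `c` the vector of the
`1 / x i`. A submatrix of `G` whose rows and columns are disjoint is a Cauchy matrix, and adjoining
the column `c` only adjoins `0` to its column parameters. The columns of a Cauchy matrix with at
least as many rows as columns are independent: by the barycentric form of Lagrange interpolation, a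
linear combination of them lists, up to nonzero factors, the values at the row parameters of a
polynomial of degree less than the number of columns.
-/

section CauchyMatrix

variable {K m n : Type*} [Field K]

/-- The Cauchy matrix with entries `1 / (f i + g j)`, in the sign convention that makes it symmetric
for `f = g`. An entry with `f i + g j = 0` takes the junk value `0`. -/
def cauchyMatrix (f : m → K) (g : n → K) : Matrix m n K :=
  of fun i j => (f i + g j)⁻¹

theorem cauchyMatrix_apply (f : m → K) (g : n → K) (i : m) (j : n) :
    cauchyMatrix f g i j = (f i + g j)⁻¹ :=
  rfl

theorem transpose_cauchyMatrix (f : m → K) (g : n → K) :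
    (cauchyMatrix f g)ᵀ = cauchyMatrix g f := by
  ext i j
  simp only [transpose_apply, cauchyMatrix_apply, add_comm]

theorem fromCols_cauchyMatrix_replicateCol_inv {u : Type*} (f : m → K) (g : n → K) :
    fromCols (cauchyMatrix f g) (replicateCol u f⁻¹) = cauchyMatrix f (Sum.elim g 0) := by
  ext i (j | j) <;> simp [cauchyMatrix_apply]

theorem eval_interpolate_neg_div_nodalWeight [Fintype n] [DecidableEq n] {g : n → K}
    (hg : Function.Injective g) (v : n → K) {a : K} (ha : ∀ j, a + g j ≠ 0) :
    (Lagrange.interpolate univ (-g) fun j => v j / Lagrange.nodalWeight univ (-g) j).eval a =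
      (Lagrange.nodal univ (-g)).eval a * ∑ j, (a + g j)⁻¹ * v j := by
  rw [Lagrange.eval_interpolate_not_at_node _ fun j _ h => ha j (by simp [h])]
  congr 1
  refine sum_congr rfl fun j _ => ?_
  have hw : Lagrange.nodalWeight univ (-g) j ≠ 0 :=
    Lagrange.nodalWeight_ne_zero (neg_injective.comp hg).injOn (mem_univ j)
  rw [Pi.neg_apply, sub_neg_eq_add]
  field_simp

theorem linearIndependent_col_cauchyMatrix [Fintype m] [Fintype n] {f : m → K} {g : n → K}
    (hf : Function.Injective f) (hg : Function.Injective g) (hfg : ∀ i j, f i + g j ≠ 0)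
    (hcard : Fintype.card n ≤ Fintype.card m) : LinearIndependent K (cauchyMatrix f g).col := by
  classical
  have hinj : Set.InjOn (-g) (univ : Finset n) := (neg_injective.comp hg).injOn
  rw [Fintype.linearIndependent_iff]
  intro v hv j
  set r : n → K := fun j => v j / Lagrange.nodalWeight univ (-g) j
  have hroot (i : m) : (Lagrange.interpolate univ (-g) r).eval (f i) = 0 := by
    have hi : ∑ j, (f i + g j)⁻¹ * v j = 0 := by
      simpa [cauchyMatrix_apply, mul_comm] using congrFun hv i
    rw [eval_interpolate_neg_div_nodalWeight hg v (hfg i), hi, mul_zero]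
  have hdeg : (Lagrange.interpolate univ (-g) r).degree < #(univ : Finset m) :=
    (Lagrange.degree_interpolate_lt r hinj).trans_le (by exact_mod_cast hcard)
  have hzero : Lagrange.interpolate univ (-g) r = 0 :=
    Polynomial.eq_zero_of_degree_lt_of_eval_index_eq_zero _ hf.injOn hdeg fun i _ => hroot i
  have hr : r j = 0 := by
    rw [← Lagrange.eval_interpolate_at_node r hinj (mem_univ j), hzero, Polynomial.eval_zero]
  exact (div_eq_zero_iff.mp hr).resolve_right (Lagrange.nodalWeight_ne_zero hinj (mem_univ j))

theorem exists_inverse_of_linearIndependent_col [Fintype m] [Fintype n] [DecidableEq m]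
    [DecidableEq n] {A : Matrix m n K} (hA : LinearIndependent K A.col)
    (hcard : Fintype.card m = Fintype.card n) : ∃ B : Matrix n m K, A * B = 1 ∧ B * A = 1 := by
  have hsurj : Function.Surjective A.mulVecLin :=
    (LinearMap.injective_iff_surjective_of_finrank_eq_finrank (by simp [hcard])).mp
      (mulVec_injective_iff.mpr hA)
  obtain ⟨B, hB⟩ := mulVec_surjective_iff_exists_right_inverse.mp hsurj
  exact ⟨B, hB, (mul_eq_one_comm_of_card_eq _ _ _ hcard).mp hB⟩

end CauchyMatrix

section CauchyGraph

variable {K ι m n : Type*} [Field K] [DecidableEq ι] {x : ι → K}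

/-- The weighted adjacency matrix of the complete graph on `ι` in which the edge `ij` has weight
`1 / (x i + x j)`: a Cauchy matrix with its diagonal replaced by zeros. -/
def cauchyGraph (x : ι → K) : Matrix ι ι K :=
  of fun i j => if i = j then 0 else cauchyMatrix x x i j

theorem cauchyGraph_apply_self (x : ι → K) (i : ι) : cauchyGraph x i i = 0 :=
  if_pos rfl

theorem cauchyGraph_apply_of_ne (x : ι → K) {i j : ι} (hij : i ≠ j) :
    cauchyGraph x i j = cauchyMatrix x x i j :=
  if_neg hij

theorem isSymm_cauchyGraph (x : ι → K) : (cauchyGraph x).IsSymm := by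
  refine IsSymm.ext fun i j => ?_
  obtain rfl | hij := eq_or_ne i j
  · rfl
  · rw [cauchyGraph_apply_of_ne x hij, cauchyGraph_apply_of_ne x hij.symm,
      ← transpose_apply (cauchyMatrix x x), transpose_cauchyMatrix]

theorem submatrix_cauchyGraph {p : m → ι} {q : n → ι} (hpq : ∀ i j, p i ≠ q j) :
    (cauchyGraph x).submatrix p q = cauchyMatrix (x ∘ p) (x ∘ q) := by
  ext i j
  exact cauchyGraph_apply_of_ne x (hpq i j)

theorem linearIndependent_row_submatrix_cauchyGraph [Fintype m] [Fintype n]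
    (hx : Function.Injective x) (hadd : Pairwise fun i j => x i + x j ≠ 0)
    {p : m → ι} {q : n → ι} (hp : Function.Injective p) (hq : Function.Injective q)
    (hpq : ∀ i j, p i ≠ q j) (hcard : Fintype.card m ≤ Fintype.card n) :
    LinearIndependent K ((cauchyGraph x).submatrix p q).row := by
  rw [submatrix_cauchyGraph hpq, ← transpose_cauchyMatrix, row_transpose]
  exact linearIndependent_col_cauchyMatrix (hx.comp hq) (hx.comp hp)
    (fun j i => hadd (hpq i j).symm) hcard

theorem linearIndependent_col_fromCols_submatrix_cauchyGraph [Fintype m] [Fintype n]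
    (hx : Function.Injective x) (hx₀ : ∀ i, x i ≠ 0) (hadd : Pairwise fun i j => x i + x j ≠ 0)
    {p : m → ι} {q : n → ι} (hp : Function.Injective p) (hq : Function.Injective q)
    (hpq : ∀ i j, p i ≠ q j) (hcard : Fintype.card n + 1 ≤ Fintype.card m) :
    LinearIndependent K
      (fromCols ((cauchyGraph x).submatrix p q) (replicateCol Unit (x ∘ p)⁻¹)).col := by
  rw [submatrix_cauchyGraph hpq, fromCols_cauchyMatrix_replicateCol_inv]
  refine linearIndependent_col_cauchyMatrix (hx.comp hp) ?_ ?_ (by simpa using hcard)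
  · exact (hx.comp hq).sumElim (Function.injective_of_subsingleton _) fun j _ => hx₀ (q j)
  · rintro i (j | _)
    · exact hadd (hpq i j)
    · simpa using hx₀ (p i)

end CauchyGraph

theorem exists_injective_ne_zero_pairwise_add_ne_zero (K ι : Type*) [Field K] [Infinite K]
    [Countable ι] :
    ∃ x : ι → K, Function.Injective x ∧ (∀ i, x i ≠ 0) ∧ Pairwise fun i j => x i + x j ≠ 0 := by
  classical
  let r : K → K → Prop := fun a b => a ≠ b ∧ a + b ≠ 0
  have : Std.Symm r := ⟨fun a b h => ⟨h.1.symm, add_comm a b ▸ h.2⟩⟩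
  obtain ⟨y, hy₀, hy⟩ := exists_seq_of_forall_finset_exists' (fun a : K => a ≠ 0) r fun s _ => by
    obtain ⟨b, hb⟩ := Infinite.exists_notMem_finset (insert 0 (s ∪ s.image Neg.neg))
    simp only [mem_insert, mem_union, mem_image, not_or, not_exists, not_and] at hb
    exact ⟨b, hb.1, fun a ha => ⟨fun h => hb.2.1 (h ▸ ha),
      fun h => hb.2.2 a ha (neg_eq_of_add_eq_zero_right h)⟩⟩
  obtain ⟨e, he⟩ := exists_injective_nat ι
  have hye : Pairwise fun i j => r (y (e i)) (y (e j)) := hy.comp_of_injective he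
  refine ⟨y ∘ e, ?_, fun i => hy₀ (e i), fun i j hij => (hye hij).2⟩
  exact Function.injective_iff_pairwise_ne.mpr fun i j hij => (hye hij).1

theorem stmt17_general (K ι : Type*) [Field K] [Infinite K] [Fintype ι] [DecidableEq ι] :
    ∃ (G : Matrix ι ι K) (c : ι → K),
      G.IsSymm ∧ (∀ i, G i i = 0) ∧
      (∀ J : Finset ι, #J = #Jᶜ + 1 →
        let A : Matrix J (↥Jᶜ ⊕ Unit) K :=
          fromCols (G.submatrix (↑) (↑)) (replicateCol Unit fun j : J => c j)
        ∃ B : Matrix (↥Jᶜ ⊕ Unit) J K, A * B = 1 ∧ B * A = 1) ∧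
      (∀ J : Finset ι, #J ≤ #Jᶜ →
        LinearIndependent K (G.submatrix ((↑) : J → ι) ((↑) : ↥Jᶜ → ι)).row) := by
  obtain ⟨x, hx, hx₀, hadd⟩ := exists_injective_ne_zero_pairwise_add_ne_zero K ι
  have hdisj (J : Finset ι) (i : J) (j : ↥Jᶜ) : (i : ι) ≠ j :=
    fun h => mem_compl.mp j.2 (h ▸ i.2)
  refine ⟨cauchyGraph x, x⁻¹, isSymm_cauchyGraph x, cauchyGraph_apply_self x,
    fun J hJ => ?_, fun J hJ => ?_⟩
  · exact exists_inverse_of_linearIndependent_col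
      (linearIndependent_col_fromCols_submatrix_cauchyGraph hx hx₀ hadd Subtype.val_injective
        Subtype.val_injective (hdisj J) (by simpa only [Fintype.card_coe] using hJ.ge))
      (by simpa only [Fintype.card_sum, Fintype.card_coe, Fintype.card_unit] using hJ)
  · exact linearIndependent_row_submatrix_cauchyGraph hx hadd Subtype.val_injective
      Subtype.val_injective (hdisj J) (by simpa only [Fintype.card_coe] using hJ)

theorem adjMat_eq_fromCols (k : ℕ) (G : Matrix (Fin (2 * k - 1)) (Fin (2 * k - 1)) ℝ)
    (c : Fin (2 * k - 1) → ℝ) (J : Finset (Fin (2 * k - 1))) :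
    adjMat k G c J = fromCols (G.submatrix (↑) (↑)) (replicateCol Unit fun j : J => c j) := by
  ext i (j | j) <;> rfl

/-- For every integer `k ≥ 1`, with `N = {1,…,2k−1}`, there exist a real
symmetric `(2k−1) × (2k−1)` matrix `G` with zero diagonal and a vector `c ∈ ℝ^{2k−1}` such that:
(i) for every `J ⊆ N` with `|J| = k`, the `k × k` matrix `[G_{J,N∖J} ∣ c_J]` is invertible; and
(ii) for every `J' ⊆ N` with `|J'| = k − 1`, the rows of the `(k−1) × k` submatrix
`G_{J',N∖J'}` are linearly independent. -/
theorem stmt17 (k : ℕ) (hk : 1 ≤ k) :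
    ∃ (G : Matrix (Fin (2 * k - 1)) (Fin (2 * k - 1)) ℝ) (c : Fin (2 * k - 1) → ℝ),
      G.IsSymm ∧ (∀ i, G i i = 0) ∧
      (∀ J : Finset (Fin (2 * k - 1)), J.card = k →
        ∃ B : Matrix ({x // x ∈ Jᶜ} ⊕ Unit) {x // x ∈ J} ℝ,
          adjMat k G c J * B = 1 ∧ B * adjMat k G c J = 1) ∧
      (∀ J' : Finset (Fin (2 * k - 1)), J'.card = k - 1 →
        LinearIndependent ℝ
          (fun j : {x // x ∈ J'} => fun i : {x // x ∈ J'ᶜ} => G j.1 i.1)) := by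
  obtain ⟨G, c, hsymm, hdiag, hinv, hind⟩ := stmt17_general ℝ (Fin (2 * k - 1))
  have hcompl (J : Finset (Fin (2 * k - 1))) : #J + #Jᶜ = 2 * k - 1 := by
    rw [card_add_card_compl, Fintype.card_fin]
  refine ⟨G, c, hsymm, hdiag, fun J hJ => ?_, fun J hJ => hind J (by have := hcompl J; omega)⟩
  simpa only [adjMat_eq_fromCols] using hinv J (by have := hcompl J; omega)
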